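/- For any group G the following conditions are equivalent: (i) there exist a finite alphabet A, an m-epi π : Ã* → G and a Stallings section S for π satisfying the stronger condition (S2') S_{gh} = (S_g·S_h)‾ for all g, h ∈ G; (ii) G is either finite or a free group of finite rank; (iii) there exist a finite alphabet A and an m-epi π : Ã* → G such that the set R_A of all reduced words is a Stallings section for π. -/

import Mathlib

/-!
The substantial implication is that a section `S` with `S_{gh} = (S_g S_h)‾` forces `G` to be
finite or free of finite rank. Such an `S` is the set of reduced words of a subgroup `K` of the free
group on `A`, and evaluation is a surjective homomorphism `K → G` whose kernel `N` has the regular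
language `S_1` as its set of reduced words.

If `N` is trivial, then `G ≅ K` is free by Nielsen–Schreier, and its rank is finite because `G` is
finitely generated (`finite_of_surjective`).

If `N` contains some `h ≠ 1`, then `G` is finite (`finite_of_regular_kernel`). Indeed there is a
fixed `p` such that, for every `k ∈ K`, the reduced word of `k p` is a prefix of the reduced word of
some `k hⁿ k⁻¹ ∈ N` (`exists_prefix_conj`). Hence the left quotient of `S_1` by the word of `k p` is
nonempty; if `k` and `k'` give the same left quotient, then `k p v, k' p v ∈ N` for a common `v`, so
`k` and `k'` have the same image in `G`. By Myhill–Nerode, `S_1` has finitely many left quotients.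

Conversely, `R_A` satisfies the equality `S_{gh} = (S_g S_h)‾` for every matched epimorphism, so
it remains to make the languages of reduced words over single elements regular. For `G` finite this
holds because the left quotients of the language of a group element are indexed by `G`; for `G` free
on `A` each such language is a singleton.
-/

/-!  Common framework: words over an involutive alphabet Ã = A ∪ A⁻¹ (modelled as
`α × Bool`), free reduction, matched epimorphisms, Stallings sections and
Ã-automata, following Silva–Soler-Escrivà–Ventura. -/

/-- A word over the involutive alphabet Ã = A ∪ A⁻¹: the letter `(a, tt)` denotes
`a` and `(a, ff)` denotes `a⁻¹` (the `FreeGroup` convention). -/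
abbrev Word (α : Type) : Type := List (α × Bool)

namespace Stallings

instance {β : Type} : HasSubset (Language β) := ⟨fun L M => ∀ w ∈ L, w ∈ M⟩
instance {β : Type} : Union (Language β) := ⟨fun L M => {w | w ∈ L ∨ w ∈ M}⟩
instance {β : Type} : Inter (Language β) := ⟨fun L M => {w | w ∈ L ∧ w ∈ M}⟩
instance {β : Type} : EmptyCollection (Language β) := ⟨(∅ : Set (List β))⟩

variable {α : Type} {G : Type} [Group G]

/-- The formal inverse of a letter of Ã. -/
def letterInv (x : α × Bool) : α × Bool := (x.1, !x.2)

/-- The formal inverse `w⁻¹` of a word over Ã. -/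
def wordInv (w : Word α) : Word α := (w.map letterInv).reverse

/-- The free reduction `w̄` of a word over Ã (iterated deletion of factors `a a⁻¹`). -/
noncomputable def redW (w : Word α) : Word α :=
  letI := Classical.decEq α
  FreeGroup.reduce w

/-- The reduction `L̄` of a language over Ã. -/
noncomputable def red (L : Language (α × Bool)) : Language (α × Bool) :=
  redW '' L

/-- The set `R_A` of reduced words over Ã. -/
noncomputable def Reduced : Language (α × Bool) := {w | redW w = w}

/-- Evaluation of a monoid homomorphism `π : Ã* → G` at a word. -/
def ev (π : FreeMonoid (α × Bool) →* G) (w : Word α) : G :=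
  π (FreeMonoid.ofList w)

/-- The image of a language under (evaluation of) `π`. -/
def evImg (π : FreeMonoid (α × Bool) →* G) (L : Language (α × Bool)) : Set G :=
  {g | ∃ w ∈ L, ev π w = g}

/-- A matched epimorphism (m-epi) `π : Ã* → G`: a surjective monoid homomorphism
sending formal inverses to inverses. -/
structure IsMEpi (π : FreeMonoid (α × Bool) →* G) : Prop where
  surjective : Function.Surjective π
  matched : ∀ (a : α) (b : Bool),
    π (FreeMonoid.of (a, !b)) = (π (FreeMonoid.of (a, b)))⁻¹

/-- `S_X = Xπ⁻¹ ∩ S`, for `X ⊆ G`. -/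
def sub (S : Language (α × Bool)) (π : FreeMonoid (α × Bool) →* G) (X : Set G) :
    Language (α × Bool) :=
  {w ∈ S | ev π w ∈ X}

/-- A Stallings section for an m-epi `π : Ã* → G`: a regular section `S ⊆ R_A`
such that each `S_g` is regular (S1), and `S_{gh} ⊆ (S_g S_h)‾` (S2). -/
structure IsStallingsSection (π : FreeMonoid (α × Bool) →* G)
    (S : Language (α × Bool)) : Prop where
  regular : S.IsRegular
  reduced : S ⊆ Reduced
  inv_mem : ∀ w ∈ S, wordInv w ∈ S
  exists_rep : ∀ g : G, ∃ w ∈ S, ev π w = g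
  s1 : ∀ g : G, (sub S π {g}).IsRegular
  s2 : ∀ g h : G, sub S π {g * h} ⊆ red (sub S π {g} * sub S π {h})

/-- A group has a Stallings section if some m-epi onto it (from the free monoid on
an involutive finite alphabet) admits a Stallings section. -/
def HasStallingsSection (G : Type) [Group G] : Prop :=
  ∃ (α : Type) (π : FreeMonoid (α × Bool) →* G) (S : Language (α × Bool)),
    Finite α ∧ IsMEpi π ∧ IsStallingsSection π S

/-- `Pref L`: the set of prefixes of words of `L`. -/
def Pref (L : Language (α × Bool)) : Language (α × Bool) :=
  {u | ∃ v, u ++ v ∈ L}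

/-- An extendable Stallings section: every `u ∈ S` admits a reduced word `v` with
`u vⁿ ∈ S` for all `n` and `u ∈ Pref (S_{(u vⁿ u⁻¹)π})` for almost all `n`. -/
def Extendable (π : FreeMonoid (α × Bool) →* G) (S : Language (α × Bool)) : Prop :=
  ∀ u ∈ S, ∃ v : Word α, v ∈ Reduced ∧
    (∀ n : ℕ, u ++ (List.replicate n v).flatten ∈ S) ∧
    ∃ N : ℕ, ∀ n ≥ N, u ∈ Pref (sub S π {ev π u * (ev π v) ^ n * (ev π u)⁻¹})

/-- An Ã-automaton with state type `Q`, initial state `start`, terminal states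
`accept` and edge set `edges`. -/
structure Automaton (β : Type) (Q : Type) where
  start : Q
  accept : Set Q
  edges : Set (Q × β × Q)

namespace Automaton

variable {β Q : Type}

/-- `M.Path p w q`: there is a path from `p` to `q` labelled `w`. -/
inductive Path (M : Automaton β Q) : Q → List β → Q → Prop
  | nil (q : Q) : Path M q [] q
  | cons {p q r : Q} {a : β} {w : List β} :
      (p, a, q) ∈ M.edges → Path M q w r → Path M p (a :: w) r

/-- The language recognized by an automaton. -/
def lang (M : Automaton β Q) : Language β :=
  {w | ∃ t ∈ M.accept, M.Path M.start w t}

/-- A trim automaton: every state lies on some successful path. -/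
def Trim (M : Automaton β Q) : Prop :=
  ∀ q : Q, ∃ (u v : List β) (t : Q), t ∈ M.accept ∧ M.Path M.start u q ∧ M.Path q v t

/-- An involutive Ã-automaton. -/
def Involutive {α : Type} (M : Automaton (α × Bool) Q) : Prop :=
  ∀ p a q, (p, a, q) ∈ M.edges → (q, letterInv a, p) ∈ M.edges

/-- A deterministic automaton. -/
def Deterministic (M : Automaton β Q) : Prop :=
  ∀ p a q q', (p, a, q) ∈ M.edges → (p, a, q') ∈ M.edges → q = q'

/-- An inverse automaton: involutive, deterministic, trim, with a single
terminal state. -/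
def IsInverse {α : Type} (M : Automaton (α × Bool) Q) : Prop :=
  M.Involutive ∧ M.Deterministic ∧ M.Trim ∧ ∃ t : Q, M.accept = {t}

/-- The automaton obtained by identifying the states `p` and `q` (the quotient is
realized on the same state type, redirecting `q` to `p`). -/
def merge [DecidableEq Q] (M : Automaton β Q) (p q : Q) : Automaton β Q :=
  let f : Q → Q := fun x => if x = q then p else x
  { start := f M.start
    accept := f '' M.accept
    edges := {e | ∃ e' ∈ M.edges, e = (f e'.1, e'.2.1, f e'.2.2)} }

end Automaton

end Stallings

namespace Stallings

/-! ### Words and the free group -/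

section FreeGroupWords

variable {α : Type}

theorem redW_eq [DecidableEq α] (w : Word α) : redW w = FreeGroup.reduce w := by
  unfold redW
  congr!

theorem mem_reduced [DecidableEq α] {w : Word α} :
    w ∈ (Reduced : Language (α × Bool)) ↔ FreeGroup.IsReduced w := by
  rw [FreeGroup.isReduced_iff_reduce_eq, ← redW_eq]
  exact Iff.rfl

theorem wordInv_eq (w : Word α) : wordInv w = FreeGroup.invRev w := rfl

theorem isReduced_append_iff {u v : Word α} :
    FreeGroup.IsReduced (u ++ v) ↔ FreeGroup.IsReduced u ∧ FreeGroup.IsReduced v ∧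
      ∀ a ∈ u.getLast?, ∀ b ∈ v.head?, a.1 = b.1 → a.2 = b.2 := by
  unfold FreeGroup.IsReduced
  exact List.isChain_append

/-- Right multiplication by a word `y` shorter than `v` cannot cancel past the end of `u` in the
reduced word `u ++ v`. -/
theorem exists_reduce_eq_append [DecidableEq α] (u y : Word α) : ∀ v : Word α,
    FreeGroup.IsReduced (u ++ v) → y.length < v.length →
      ∃ t, FreeGroup.reduce (u ++ v ++ y) = u ++ t := by
  induction y with
  | nil =>
    intro v h _
    exact ⟨v, by simpa using h.reduce_eq⟩
  | cons b y ih =>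
    intro v h hl
    obtain rfl | ⟨v, e, rfl⟩ := List.eq_nil_or_concat v
    · simp at hl
    by_cases he : e.1 = b.1 → e.2 = b.2
    · obtain ⟨t, ht⟩ := ih (v ++ [e] ++ [b]) (by
        rw [← List.append_assoc, isReduced_append_iff]
        refine ⟨by simpa using h, FreeGroup.IsReduced.singleton, ?_⟩
        simpa [← List.append_assoc] using he) (by simp at hl ⊢; omega)
      exact ⟨t, by simpa using ht⟩
    · obtain ⟨t, ht⟩ := ih v (h.infix ⟨[], [e], by simp⟩) (by simp at hl; omega)
      refine ⟨t, ?_⟩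
      rw [← ht]
      obtain ⟨e1, e2⟩ := e
      obtain ⟨b1, b2⟩ := b
      push Not at he
      obtain ⟨rfl, he⟩ : e1 = b1 ∧ e2 ≠ b2 := he
      obtain rfl : b2 = !e2 := by cases e2 <;> cases b2 <;> simp_all
      apply FreeGroup.reduce.Step.eq
      simpa using FreeGroup.Red.Step.not (L₁ := u ++ v) (L₂ := y) (x := e1) (b := e2)

theorem isCyclicallyReduced_invRev [DecidableEq α] {c : Word α}
    (hc : FreeGroup.IsCyclicallyReduced c) :
    FreeGroup.IsCyclicallyReduced (FreeGroup.invRev c) := by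
  refine ⟨?_, ?_⟩
  · rw [FreeGroup.isReduced_iff_reduce_eq, FreeGroup.reduce_invRev, hc.isReduced.reduce_eq]
  · intro a ha b hb hab
    simp only [FreeGroup.invRev, List.getLast?_reverse, List.head?_reverse, List.head?_map,
      List.getLast?_map, Option.mem_def, Option.map_eq_some_iff] at ha hb
    obtain ⟨a, ha, rfl⟩ := ha
    obtain ⟨b, hb, rfl⟩ := hb
    have := hc.2 b hb a ha hab.symm
    simp [this]

/-- A reduced word can be continued without cancellation by any given cyclically reduced
word or by its inverse: cancellation with both would make the first letter of `c` inverse to its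
last letter. -/
theorem isReduced_append_or {x c : Word α} (hx : FreeGroup.IsReduced x)
    (hc : FreeGroup.IsCyclicallyReduced c)
    (hi : FreeGroup.IsCyclicallyReduced (FreeGroup.invRev c)) :
    FreeGroup.IsReduced (x ++ c) ∨ FreeGroup.IsReduced (x ++ FreeGroup.invRev c) := by
  by_contra! h
  obtain ⟨h1, h2⟩ := h
  simp only [isReduced_append_iff, hx, hc.isReduced, hi.isReduced, true_and, not_forall] at h1 h2
  obtain ⟨a, ha, b, hb, hab, hn⟩ := h1
  obtain ⟨a', ha', e, he, hae, hn'⟩ := h2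
  obtain rfl : a = a' := Option.mem_unique ha ha'
  simp only [FreeGroup.invRev, List.head?_reverse, List.getLast?_map, Option.mem_def,
    Option.map_eq_some_iff] at he
  obtain ⟨e, he, rfl⟩ := he
  have := hc.2 e he b hb (hae.symm.trans hab)
  simp only at hn'
  grind

/-- If `c` is a nonempty cyclically reduced word that continues the reduced word of `x` without
cancellation, then so do its powers, and for `n` large `x⁻¹` is too short to cancel all of
`c ^ n`. -/
theorem exists_toWord_conj [DecidableEq α] {c : Word α} (hc : FreeGroup.IsCyclicallyReduced c)
    (hne : c ≠ []) (x : FreeGroup α) (h : FreeGroup.IsReduced (x.toWord ++ c)) :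
    ∃ (n : ℕ) (t : Word α),
      (x * FreeGroup.mk c ^ n * x⁻¹).toWord = x.toWord ++ t := by
  refine ⟨x.toWord.length + 1, ?_⟩
  obtain ⟨t, ht⟩ := exists_reduce_eq_append x.toWord (FreeGroup.invRev x.toWord)
    (List.replicate (x.toWord.length + 1) c).flatten
    (by simpa using FreeGroup.IsReduced.append_flatten_replicate_append (L₃ := []) hc
          (by simpa using h) (Nat.succ_ne_zero x.toWord.length))
    (by
      have := List.length_pos_of_ne_nil hne
      simp only [FreeGroup.invRev_length, List.length_flatten, List.map_replicate,
        List.sum_replicate, smul_eq_mul]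
      nlinarith)
  refine ⟨t, ?_⟩
  rw [← ht, ← FreeGroup.toWord_mk, ← FreeGroup.mul_mk, ← FreeGroup.mul_mk, ← FreeGroup.inv_mk,
    ← FreeGroup.pow_mk, FreeGroup.mk_toWord]

/-- For `h ≠ 1` there is a fixed `p` such that, for every `k`, the reduced word of `k * p` is
a prefix of the reduced word of some conjugate `k * h ^ n * k⁻¹`. Geometrically, `p` is the point
where the segment from `1` meets the axis of `h` in the Cayley tree: as `k * p` lies on the axis of
`k * h * k⁻¹`, the geodesic from `1` to `k * h ^ n * k⁻¹` runs through `k * p` once `|n|` is large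
and `n` has the right sign. -/
theorem exists_prefix_conj [DecidableEq α] {h : FreeGroup α} (hh : h ≠ 1) :
    ∃ p : FreeGroup α, ∀ k : FreeGroup α, ∃ (n : ℤ) (t : Word α),
      (k * h ^ n * k⁻¹).toWord = (k * p).toWord ++ t := by
  set c := FreeGroup.reduceCyclically h.toWord with hcdef
  set p := FreeGroup.mk (FreeGroup.reduceCyclically.conjugator h.toWord) with hpdef
  have hc : FreeGroup.IsCyclicallyReduced c :=
    FreeGroup.reduceCyclically.isCyclicallyReduced FreeGroup.isReduced_toWord
  have hi := isCyclicallyReduced_invRev hc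
  have hconj : h = p * FreeGroup.mk c * p⁻¹ := by
    rw [hpdef, hcdef, FreeGroup.inv_mk, FreeGroup.mul_mk, FreeGroup.mul_mk,
      FreeGroup.reduceCyclically.conj_conjugator_reduceCyclically, FreeGroup.mk_toWord]
  have hne : c ≠ [] := by
    intro h0
    rw [h0] at hconj
    apply hh
    rw [hconj, ← FreeGroup.one_eq_mk]
    group
  have key : ∀ (k : FreeGroup α) (n : ℤ),
      k * h ^ n * k⁻¹ = (k * p) * FreeGroup.mk c ^ n * (k * p)⁻¹ := by
    intro k n
    rw [hconj, conj_zpow]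
    group
  refine ⟨p, fun k => ?_⟩
  rcases isReduced_append_or (FreeGroup.isReduced_toWord (x := k * p)) hc hi with hr | hr
  · obtain ⟨n, t, ht⟩ := exists_toWord_conj hc hne (k * p) hr
    exact ⟨n, t, by rw [key, zpow_natCast, ht]⟩
  · obtain ⟨n, t, ht⟩ := exists_toWord_conj hi
      (by simpa [FreeGroup.invRev] using hne) (k * p) hr
    refine ⟨-n, t, ?_⟩
    rw [key, zpow_neg, ← inv_zpow, FreeGroup.inv_mk, zpow_natCast, ht]

end FreeGroupWords

/-! ### Regular normal subgroups -/

/-- Let `K` be a subgroup of a free group mapping onto `G`, and suppose that the kernel of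
`K → G` is nontrivial and that its reduced words form a regular language `L`. Then `G` is finite:
with `p` as in `exists_prefix_conj`, every `k * p` with `k ∈ K` is spelled by a prefix of a word of
`L`, and the left quotient of `L` by it determines the image of `k` in `G`. -/
theorem finite_of_regular_kernel {α G : Type} [Group G] [DecidableEq α]
    (f : FreeGroup α →* G) (K : Subgroup (FreeGroup α)) (hK : ∀ g : G, ∃ k ∈ K, f k = g)
    (L : Language (α × Bool)) (hL : L.IsRegular)
    (hmem : ∀ x : FreeGroup α, x.toWord ∈ L ↔ x ∈ K ∧ f x = 1)
    (hred : ∀ w ∈ L, FreeGroup.IsReduced w)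
    {h : FreeGroup α} (hhK : h ∈ K) (hf : f h = 1) (hh : h ≠ 1) : Finite G := by
  obtain ⟨p, hp⟩ := exists_prefix_conj hh
  choose k hkK hk using hK
  have hfin : Finite (Set.range L.leftQuotient) := hL.finite_range_leftQuotient.to_subtype
  refine Finite.of_injective
    (fun g : G => (⟨_, (k g * p).toWord, rfl⟩ : Set.range L.leftQuotient)) ?_
  intro g g' hgg
  have hq : L.leftQuotient (k g * p).toWord = L.leftQuotient (k g' * p).toWord :=
    congrArg Subtype.val hgg
  obtain ⟨n, t, ht⟩ := hp (k g)
  have h1 : t ∈ L.leftQuotient (k g * p).toWord := by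
    rw [Language.mem_leftQuotient, ← ht, hmem]
    refine ⟨K.mul_mem (K.mul_mem (hkK g) (K.zpow_mem hhK n)) (K.inv_mem (hkK g)), ?_⟩
    simp [hf]
  have aux : ∀ g₀ : G, t ∈ L.leftQuotient (k g₀ * p).toWord →
      g₀ * f (p * FreeGroup.mk t) = 1 := by
    intro g₀ h2
    rw [Language.mem_leftQuotient] at h2
    have h3 : (FreeGroup.mk ((k g₀ * p).toWord ++ t)).toWord ∈ L := by
      rwa [FreeGroup.toWord_mk, (hred _ h2).reduce_eq]
    rw [hmem, ← FreeGroup.mul_mk, FreeGroup.mk_toWord, mul_assoc, map_mul, hk] at h3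
    exact h3.2
  exact mul_right_cancel ((aux g h1).trans (aux g' (hq ▸ h1)).symm)

/-- A finitely generated group that is free on `ι` has `ι` finite: homomorphisms to a group of
order two are arbitrary functions on `ι`, but are determined by their values on finitely many
generators. -/
theorem finite_of_surjective {α ι : Type} [Finite α]
    (f : FreeGroup α →* FreeGroup ι) (hf : Function.Surjective f) : Finite ι := by
  classical
  let M := Multiplicative (ZMod 2)
  have : Finite M := inferInstanceAs (Finite (ZMod 2))
  have h1 : Finite (FreeGroup α →* M) := Finite.of_equiv _ FreeGroup.lift
  have h2 : Finite (FreeGroup ι →* M) :=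
    Finite.of_injective (fun φ => φ.comp f) fun φ ψ h => (MonoidHom.cancel_right hf).1 h
  have h3 : Finite (ι → M) := Finite.of_equiv _ (FreeGroup.lift (α := ι) (β := M)).symm
  let a : M := Multiplicative.ofAdd 1
  have ha : a ≠ 1 := by decide
  exact Finite.of_injective (fun i : ι => (Pi.mulSingle i a : ι → M)) fun i j hij => by
    by_contra hne
    have := congrFun hij i
    simp [Pi.mulSingle_eq_of_ne hne, ha] at this

/-! ### Matched epimorphisms and the free group -/

section MEpi

variable {α G : Type} [Group G]

/-- The homomorphism from the free group induced by `π`, defined from the values of `π` on the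
positive letters. -/
def homOf (π : FreeMonoid (α × Bool) →* G) : FreeGroup α →* G :=
  FreeGroup.lift fun a => π (FreeMonoid.of (a, true))

theorem ev_eq {π : FreeMonoid (α × Bool) →* G} (hπ : IsMEpi π) (w : Word α) :
    ev π w = homOf π (FreeGroup.mk w) := by
  unfold ev homOf
  rw [FreeGroup.lift_mk]
  induction w with
  | nil => simp
  | cons x w ih =>
    rw [FreeMonoid.ofList_cons, map_mul, ih, List.map_cons, List.prod_cons]
    congr 1
    obtain ⟨a, _ | _⟩ := x
    · exact hπ.matched a true
    · rfl

theorem homOf_surjective {π : FreeMonoid (α × Bool) →* G} (hπ : IsMEpi π) :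
    Function.Surjective (homOf π) := fun g => by
  obtain ⟨w, hw⟩ := hπ.surjective g
  exact ⟨FreeGroup.mk (FreeMonoid.toList w), by rw [← ev_eq hπ, ev, FreeMonoid.ofList_toList, hw]⟩

/-- The monoid homomorphism on words induced by a homomorphism from the free group. -/
def monOf (f : FreeGroup α →* G) : FreeMonoid (α × Bool) →* G :=
  FreeMonoid.lift fun x => f (FreeGroup.mk [x])

theorem ev_monOf (f : FreeGroup α →* G) (w : Word α) :
    ev (monOf f) w = f (FreeGroup.mk w) := by
  unfold ev monOf
  induction w with
  | nil => rw [← FreeGroup.one_eq_mk]; simp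
  | cons x w ih =>
    rw [FreeMonoid.ofList_cons, map_mul, ih, FreeMonoid.lift_eval_of, ← map_mul, FreeGroup.mul_mk]
    rfl

theorem isMEpi_monOf {f : FreeGroup α →* G} (hf : Function.Surjective f) : IsMEpi (monOf f) where
  surjective g := by
    obtain ⟨⟨w⟩, hw⟩ := hf g
    exact ⟨FreeMonoid.ofList w, (ev_monOf f w).trans hw⟩
  matched a b := by
    simp only [monOf, FreeMonoid.lift_eval_of, ← map_inv, FreeGroup.inv_mk]
    rfl

theorem ev_append (π : FreeMonoid (α × Bool) →* G) (u v : Word α) :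
    ev π (u ++ v) = ev π u * ev π v := by
  simp [ev, FreeMonoid.ofList_append]

end MEpi

/-! ### Regularity of the language of all reduced words -/

section Regular

variable {α G : Type} [Group G]

theorem regular_reduced [Finite α] : (Reduced : Language (α × Bool)).IsRegular := by
  classical
  apply Language.IsRegular.of_finite_range_leftQuotient
  -- The left quotient by `u` depends only on whether `u` is reduced and on its last letter.
  let F : Prop × Option (α × Bool) → Language (α × Bool) := fun s =>
    {y | s.1 ∧ FreeGroup.IsReduced y ∧ ∀ a ∈ s.2, ∀ b ∈ y.head?, a.1 = b.1 → a.2 = b.2}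
  refine (Set.finite_range F).subset ?_
  rintro _ ⟨u, rfl⟩
  refine ⟨(FreeGroup.IsReduced u, u.getLast?), ?_⟩
  ext y
  rw [Language.mem_leftQuotient, mem_reduced, isReduced_append_iff]
  exact Iff.rfl

theorem regular_sub_of_finite [Finite α] [Finite G] (π : FreeMonoid (α × Bool) →* G) (g : G) :
    (sub Reduced π {g}).IsRegular := by
  have h : Language.IsRegular ({w | ev π w = g} : Set (Word α)) := by
    apply Language.IsRegular.of_finite_range_leftQuotient
    let F : G → Language (α × Bool) := fun s => {y | s * ev π y = g}
    refine (Set.finite_range F).subset ?_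
    rintro _ ⟨u, rfl⟩
    refine ⟨ev π u, ?_⟩
    ext y
    change _ ↔ ev π (u ++ y) = g
    rw [ev_append]
    exact Iff.rfl
  exact regular_reduced.inf h

theorem regular_of_forall_eq {β : Type} {L : Language β} {w : List β}
    (hL : ∀ y, y ∈ L ↔ y = w) : L.IsRegular := by
  apply Language.IsRegular.of_finite_range_leftQuotient
  -- The left quotient by `u` is empty unless `u` is a prefix of `w`.
  let F : ℕ → Language β := fun i => ({w.drop i} : Set (List β))
  refine (((Set.finite_Iic w.length).image F).insert (∅ : Set (List β))).subset ?_
  rintro _ ⟨u, rfl⟩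
  by_cases h : u <+: w
  · refine Or.inr ⟨u.length, h.length_le, ?_⟩
    obtain ⟨v, rfl⟩ := h
    ext y
    rw [Language.mem_leftQuotient, hL]
    change y = (u ++ v).drop u.length ↔ u ++ y = u ++ v
    simp
  · refine Or.inl ?_
    ext y
    exact ⟨fun h' => h ⟨y, (hL _).1 h'⟩, False.elim⟩

theorem isStallingsSection_reduced [Finite α] {π : FreeMonoid (α × Bool) →* G} (hπ : IsMEpi π)
    (h1 : ∀ g : G, (sub Reduced π {g}).IsRegular) :
    IsStallingsSection π (Reduced : Language (α × Bool)) := by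
  classical
  have rep : ∀ g : G, ∃ w ∈ (Reduced : Language (α × Bool)), ev π w = g := by
    intro g
    obtain ⟨x, hx⟩ := homOf_surjective hπ g
    exact ⟨x.toWord, mem_reduced.2 FreeGroup.isReduced_toWord, by
      rw [ev_eq hπ, FreeGroup.mk_toWord, hx]⟩
  refine ⟨regular_reduced, fun _ h => h, ?_, rep, h1, ?_⟩
  · intro w hw
    rw [mem_reduced] at hw ⊢
    rw [wordInv_eq, FreeGroup.isReduced_iff_reduce_eq, FreeGroup.reduce_invRev, hw.reduce_eq]
  · rintro g h w ⟨hw, hwe⟩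
    obtain ⟨u, hu, hue⟩ := rep g
    refine ⟨u ++ ((FreeGroup.mk u)⁻¹ * FreeGroup.mk w).toWord, Language.append_mem_mul ⟨hu, hue⟩
      ⟨mem_reduced.2 FreeGroup.isReduced_toWord, ?_⟩, ?_⟩
    · have hwe' : ev π w = g * h := hwe
      change ev π _ = h
      rw [ev_eq hπ, FreeGroup.mk_toWord, map_mul, map_inv, ← ev_eq hπ, ← ev_eq hπ, hue, hwe']
      group
    · rw [redW_eq, ← FreeGroup.toWord_mk, ← FreeGroup.mul_mk, FreeGroup.mk_toWord,
        mul_inv_cancel_left, FreeGroup.toWord_mk]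
      exact (mem_reduced.1 hw).reduce_eq

end Regular

/-! ### The three implications -/

section Implications

variable {G : Type} [Group G]

theorem exists_reduced_section (hG : Finite G ∨ ∃ n : ℕ, Nonempty (G ≃* FreeGroup (Fin n))) :
    ∃ (α : Type) (π : FreeMonoid (α × Bool) →* G),
      Finite α ∧ IsMEpi π ∧ IsStallingsSection π (Reduced : Language (α × Bool)) := by
  classical
  rcases hG with hG | ⟨n, ⟨e⟩⟩
  · have hf : Function.Surjective (FreeGroup.lift (id : G → G)) := fun g =>
      ⟨FreeGroup.of g, by simp⟩
    exact ⟨G, monOf (FreeGroup.lift id), hG, isMEpi_monOf hf,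
      isStallingsSection_reduced (isMEpi_monOf hf) fun g => regular_sub_of_finite _ g⟩
  · have hπ : IsMEpi (monOf (e.symm : FreeGroup (Fin n) →* G)) := isMEpi_monOf e.symm.surjective
    refine ⟨Fin n, _, inferInstance, hπ, isStallingsSection_reduced hπ fun g => ?_⟩
    refine regular_of_forall_eq (w := (e g).toWord) fun w => ?_
    change w ∈ Reduced ∧ ev _ w = g ↔ w = (e g).toWord
    rw [ev_monOf, mem_reduced]
    constructor
    · rintro ⟨hw, rfl⟩
      simp [hw.reduce_eq]
    · rintro rfl
      refine ⟨FreeGroup.isReduced_toWord, ?_⟩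
      rw [FreeGroup.mk_toWord]
      exact e.symm_apply_apply g

/-- The inclusion `(S_g S_h)‾ ⊆ S_{gh}` is automatic for the section of all reduced words. -/
theorem sub_mul_reduced {α : Type} {π : FreeMonoid (α × Bool) →* G} (hπ : IsMEpi π)
    (hS : IsStallingsSection π (Reduced : Language (α × Bool))) (g h : G) :
    sub Reduced π {g * h} = red (sub Reduced π {g} * sub Reduced π {h}) := by
  classical
  apply Set.Subset.antisymm (hS.s2 g h)
  rintro _ ⟨_, hw, rfl⟩
  obtain ⟨u, ⟨-, hu⟩, v, ⟨-, hv⟩, rfl⟩ := Language.mem_mul.1 hw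
  have hu' : ev π u = g := hu
  have hv' : ev π v = h := hv
  refine ⟨?_, ?_⟩
  · rw [redW_eq, mem_reduced, FreeGroup.isReduced_iff_reduce_eq, FreeGroup.reduce.idem]
  · change ev π _ = g * h
    rw [redW_eq, ev_eq hπ, FreeGroup.reduce.self, ← ev_eq hπ, ev_append, hu', hv']

theorem finite_or_free {α : Type} {π : FreeMonoid (α × Bool) →* G} {S : Language (α × Bool)}
    [Finite α] (hπ : IsMEpi π) (hS : IsStallingsSection π S)
    (hmul : ∀ g h : G, sub S π {g * h} = red (sub S π {g} * sub S π {h})) :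
    Finite G ∨ ∃ n : ℕ, Nonempty (G ≃* FreeGroup (Fin n)) := by
  classical
  have hr : ∀ w ∈ S, FreeGroup.IsReduced w := fun w hw => mem_reduced.1 (hS.reduced w hw)
  have mulmem : ∀ x y : FreeGroup α, x.toWord ∈ S → y.toWord ∈ S → (x * y).toWord ∈ S := by
    intro x y hx hy
    have : (x * y).toWord ∈ sub S π {ev π x.toWord * ev π y.toWord} := by
      rw [hmul]
      exact ⟨_, Language.append_mem_mul ⟨hx, rfl⟩ ⟨hy, rfl⟩,
        by rw [redW_eq, FreeGroup.toWord_mul]⟩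
    exact this.1
  have invmem : ∀ x : FreeGroup α, x.toWord ∈ S → x⁻¹.toWord ∈ S := by
    intro x hx
    rw [FreeGroup.toWord_inv]
    exact hS.inv_mem _ hx
  have rep : ∀ g : G, ∃ k : FreeGroup α, k.toWord ∈ S ∧ homOf π k = g := by
    intro g
    obtain ⟨w, hw, hwe⟩ := hS.exists_rep g
    exact ⟨FreeGroup.mk w, by rwa [FreeGroup.toWord_mk, (hr w hw).reduce_eq], by
      rw [← ev_eq hπ, hwe]⟩
  let K : Subgroup (FreeGroup α) :=
    { carrier := {x | x.toWord ∈ S}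
      mul_mem' := fun {x y} hx hy => mulmem x y hx hy
      one_mem' := by
        obtain ⟨k, hk, -⟩ := rep 1
        simpa using mulmem _ _ hk (invmem _ hk)
      inv_mem' := fun {x} hx => invmem x hx }
  by_cases hker : ∃ h ∈ K, homOf π h = 1 ∧ h ≠ 1
  · left
    obtain ⟨h, hhK, hf, hh⟩ := hker
    refine finite_of_regular_kernel (homOf π) K rep (sub S π {1}) (hS.s1 1) ?_
      (fun w hw => hr w hw.1) hhK hf hh
    intro x
    change x.toWord ∈ S ∧ ev π x.toWord = 1 ↔ _
    rw [ev_eq hπ, FreeGroup.mk_toWord]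
    exact Iff.rfl
  · right
    have hinj : Function.Injective ((homOf π).comp K.subtype) := by
      rw [injective_iff_map_eq_one]
      rintro ⟨x, hx⟩ h1
      by_contra hne
      exact hker ⟨x, hx, h1, fun h => hne (Subtype.ext h)⟩
    have hsurj : Function.Surjective ((homOf π).comp K.subtype) := fun g => by
      obtain ⟨k, hk, hkg⟩ := rep g
      exact ⟨⟨k, hk⟩, hkg⟩
    let e : K ≃* G := MulEquiv.ofBijective _ ⟨hinj, hsurj⟩
    let e' : G ≃* FreeGroup (IsFreeGroup.Generators K) :=
      e.symm.trans (IsFreeGroup.toFreeGroup K)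
    have : Finite (IsFreeGroup.Generators K) :=
      finite_of_surjective ((e' : G →* _).comp (homOf π))
        (e'.surjective.comp (homOf_surjective hπ))
    obtain ⟨n, ⟨i⟩⟩ := Finite.exists_equiv_fin (IsFreeGroup.Generators K)
    exact ⟨n, ⟨e'.trans (FreeGroup.freeGroupCongr i)⟩⟩

end Implications

end Stallings

open Stallings in
/-- For a group `G` the following are equivalent: (i) some m-epi
`π : Ã* → G` admits a Stallings section satisfying (S2') `S_{gh} = (S_g S_h)‾`;
(ii) `G` is finite or free of finite rank; (iii) for some m-epi `π : Ã* → G` the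
set `R_A` of all reduced words is a Stallings section. -/
theorem strongStallingsSection_characterization {G : Type} [Group G] :
    ((∃ (α : Type) (π : FreeMonoid (α × Bool) →* G) (S : Language (α × Bool)),
        Finite α ∧ IsMEpi π ∧ IsStallingsSection π S ∧
        ∀ g h : G, sub S π {g * h} = red (sub S π {g} * sub S π {h})) ↔
      (Finite G ∨ ∃ n : ℕ, Nonempty (G ≃* FreeGroup (Fin n)))) ∧
    ((Finite G ∨ ∃ n : ℕ, Nonempty (G ≃* FreeGroup (Fin n))) ↔
      ∃ (α : Type) (π : FreeMonoid (α × Bool) →* G),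
        Finite α ∧ IsMEpi π ∧
        IsStallingsSection π (Reduced : Language (α × Bool))) := by
  have h12 : (∃ (α : Type) (π : FreeMonoid (α × Bool) →* G) (S : Language (α × Bool)),
        Finite α ∧ IsMEpi π ∧ IsStallingsSection π S ∧
        ∀ g h : G, sub S π {g * h} = red (sub S π {g} * sub S π {h})) →
      (Finite G ∨ ∃ n : ℕ, Nonempty (G ≃* FreeGroup (Fin n))) := by
    rintro ⟨α, π, S, hα, hπ, hS, hmul⟩
    exact finite_or_free hπ hS hmul
  refine ⟨⟨h12, fun h => ?_⟩, exists_reduced_section, ?_⟩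
  · obtain ⟨α, π, hα, hπ, hS⟩ := exists_reduced_section h
    exact ⟨α, π, Reduced, hα, hπ, hS, sub_mul_reduced hπ hS⟩
  · rintro ⟨α, π, hα, hπ, hS⟩
    exact h12 ⟨α, π, Reduced, hα, hπ, hS, sub_mul_reduced hπ hS⟩
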